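/- For every θ ∈ ℝ^d with σ_θ ≥ σ one has σ_θ² ≤ (10/(1−η̃)²)·(f(θ) − f(θ*))². -/

import Mathlib

/-!
Let `X` be a centered Gaussian of variance `v` and `S = {X + t > 0}`. Then
`E|X + t| = 2 E[(X + t) 1_S] - E[X + t]`, whereas `E|c X + t| ≥ 2 E[(c X + t) 1_S] - E[c X + t]`
because `2 · 1_S - 1` takes values in `{-1, 1}`. Subtracting,
`E|c X + t| - E|X + t| ≥ 2 (c - 1) E[X 1_S]`, and `E[X 1_S]` is `v` times the density of `X` at `t`.

The Gaussian parts of the residuals at `θ` and `θ*` have variances `σ_θ² + σ²` and `σ²`, so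
averaging this bound over `t = b` yields
`f(θ) - f(θ*) ≥ √(2/π) (1 - η̃) (√(σ_θ² + σ²) - σ)`.
If `σ_θ ≥ σ`, the last factor is at least `(√2 - 1) σ_θ`, and `10 ((√2 - 1) √(2/π))² ≈ 1.09 ≥ 1`.
-/

open MeasureTheory ProbabilityTheory Real
open scoped RealInnerProductSpace ENNReal

noncomputable section

/-- Euclidean space `ℝ^d`. -/
abbrev Vec (d : ℕ) := EuclideanSpace ℝ (Fin d)

/-- The expected `ℓ¹` loss `f(θ) = E |y - ⟨x, θ⟩|` where `y = ⟨x, θ*⟩ + ε + b`. -/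
noncomputable def fLoss {d : ℕ} {Ω : Type} [MeasurableSpace Ω] (P : Measure Ω)
    (x : Ω → Vec d) (ε b : Ω → ℝ) (θs θ : Vec d) : ℝ :=
  ∫ ω, |⟪x ω, θs⟫ + ε ω + b ω - ⟪x ω, θ⟫| ∂P

/-- `σ_θ = ‖θ - θ*‖_H = √⟨θ - θ*, H (θ - θ*)⟩`. -/
noncomputable def sigTh {d : ℕ} (H : Matrix (Fin d) (Fin d) ℝ) (θs θ : Vec d) : ℝ :=
  Real.sqrt ⟪θ - θs, Matrix.toEuclideanLin H (θ - θs)⟫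

/-- The effective outlier proportion `η̃ = 1 - E[exp (-b² / (2σ²))]`. -/
noncomputable def etaT {Ω : Type} [MeasurableSpace Ω] (P : Measure Ω) (b : Ω → ℝ)
    (σ : ℝ) : ℝ :=
  1 - ∫ ω, Real.exp (-(b ω) ^ 2 / (2 * σ ^ 2)) ∂P

/-- `α(z) = √(2/π) · (σ² + z²)^(-1/2) · E[exp (-b² / (2 (σ² + z²)))]`. -/
noncomputable def alphaF {Ω : Type} [MeasurableSpace Ω] (P : Measure Ω) (b : Ω → ℝ)
    (σ z : ℝ) : ℝ :=
  Real.sqrt (2 / π) * (Real.sqrt (σ ^ 2 + z ^ 2))⁻¹ *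
    ∫ ω, Real.exp (-(b ω) ^ 2 / (2 * (σ ^ 2 + z ^ 2))) ∂P

/-- The Gauss error function. -/
noncomputable def erf (t : ℝ) : ℝ :=
  2 / Real.sqrt π * ∫ u in (0:ℝ)..t, Real.exp (-u ^ 2)

section L1Duality

variable {α : Type*} [MeasurableSpace α] {μ : Measure α} {f : α → ℝ} {s : Set α}

lemma two_mul_setIntegral_sub_integral_le_integral_abs (hf : Integrable f μ)
    (hs : MeasurableSet s) : 2 * ∫ x in s, f x ∂μ - ∫ x, f x ∂μ ≤ ∫ x, |f x| ∂μ := by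
  have hle : ∫ x in s, f x ∂μ ≤ ∫ x in s, |f x| ∂μ :=
    integral_mono hf.integrableOn hf.abs.integrableOn fun x => le_abs_self (f x)
  have hle_compl : -∫ x in sᶜ, f x ∂μ ≤ ∫ x in sᶜ, |f x| ∂μ := by
    rw [← integral_neg]
    exact integral_mono hf.integrableOn.neg hf.abs.integrableOn fun x => neg_le_abs (f x)
  linarith [integral_add_compl hs hf, integral_add_compl hs hf.abs]

lemma integral_abs_eq_two_mul_setIntegral_sub_integral (hf : Integrable f μ)
    (hs : MeasurableSet s) (hpos : ∀ x ∈ s, 0 ≤ f x) (hneg : ∀ x ∉ s, f x ≤ 0) :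
    ∫ x, |f x| ∂μ = 2 * ∫ x in s, f x ∂μ - ∫ x, f x ∂μ := by
  have heq : ∫ x in s, |f x| ∂μ = ∫ x in s, f x ∂μ :=
    setIntegral_congr_fun hs fun x hx => abs_of_nonneg (hpos x hx)
  have heq_compl : ∫ x in sᶜ, |f x| ∂μ = -∫ x in sᶜ, f x ∂μ := by
    rw [← integral_neg]
    exact setIntegral_congr_fun hs.compl fun x hx => abs_of_nonpos (hneg x hx)
  linarith [integral_add_compl hs hf, integral_add_compl hs hf.abs]

end L1Duality

section Gaussian

open Set Filter Topology
open scoped NNReal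

lemma hasDerivAt_gaussianPDFReal (m : ℝ) (v : ℝ≥0) (x : ℝ) :
    HasDerivAt (gaussianPDFReal m v) (-((x - m) / v * gaussianPDFReal m v x)) x := by
  have hexponent : HasDerivAt (fun y : ℝ => -(y - m) ^ 2 / (2 * v)) (-((x - m) / v)) x :=
    ((((hasDerivAt_id' x).sub_const m).pow 2).neg.div_const _).congr_deriv (by
      rw [neg_div, show ((2 : ℕ) : ℝ) = 2 by norm_num]
      ring_nf)
  exact (hexponent.exp.const_mul _).congr_deriv (by rw [gaussianPDFReal]; ring)

lemma tendsto_gaussianPDFReal_atTop (m : ℝ) {v : ℝ≥0} (hv : v ≠ 0) :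
    Tendsto (gaussianPDFReal m v) atTop (𝓝 0) := by
  have hsq : Tendsto (fun x : ℝ => (x - m) ^ 2 / (2 * v)) atTop atTop :=
    ((tendsto_pow_atTop two_ne_zero).comp
      (tendsto_atTop_add_const_right _ (-m) tendsto_id)).atTop_div_const (by positivity)
  have hexp := (tendsto_exp_neg_atTop_nhds_zero.comp hsq).const_mul (√(2 * π * v))⁻¹
  simpa only [gaussianPDFReal_def, Function.comp_def, neg_div, mul_zero] using hexp

lemma integrable_gaussianReal_iff {F : Type*} [NormedAddCommGroup F] [NormedSpace ℝ F] {m : ℝ}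
    {v : ℝ≥0} (hv : v ≠ 0) {f : ℝ → F} :
    Integrable f (gaussianReal m v) ↔ Integrable fun x => gaussianPDFReal m v x • f x := by
  rw [gaussianReal_of_var_ne_zero m hv, integrable_withDensity_iff_integrable_smul'
    (measurable_gaussianPDF m v) (ae_of_all _ fun _ => gaussianPDF_lt_top)]
  simp only [toReal_gaussianPDF]

lemma integrable_id_gaussianReal (m : ℝ) (v : ℝ≥0) :
    Integrable (fun x => x) (gaussianReal m v) :=
  (memLp_id_gaussianReal 1).integrable le_rfl

lemma setIntegral_Ioi_sub_gaussianReal (m : ℝ) {v : ℝ≥0} (hv : v ≠ 0) (c : ℝ) :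
    ∫ x in Ioi c, (x - m) ∂gaussianReal m v = v * gaussianPDFReal m v c := by
  have hderiv (x : ℝ) : HasDerivAt (fun y => -(v * gaussianPDFReal m v y))
      (gaussianPDFReal m v x • (x - m)) x :=
    ((hasDerivAt_gaussianPDFReal m v x).const_mul (v : ℝ)).neg.congr_deriv (by
      rw [smul_eq_mul]
      field_simp)
  have hint : Integrable fun x => gaussianPDFReal m v x • (x - m) :=
    (integrable_gaussianReal_iff hv).1 ((integrable_id_gaussianReal m v).sub (integrable_const m))
  have hlim : Tendsto (fun y => -(v * gaussianPDFReal m v y)) atTop (𝓝 0) := by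
    simpa only [mul_zero, neg_zero] using
      ((tendsto_gaussianPDFReal_atTop m hv).const_mul (v : ℝ)).neg
  calc ∫ x in Ioi c, (x - m) ∂gaussianReal m v
      = ∫ x in Ioi c, gaussianPDFReal m v x • (x - m) := by
        rw [gaussianReal_of_var_ne_zero m hv, setIntegral_withDensity_eq_setIntegral_toReal_smul
          (measurable_gaussianPDF m v) (ae_of_all _ fun _ => gaussianPDF_lt_top) _
          measurableSet_Ioi]
        simp only [toReal_gaussianPDF]
    _ = 0 - -(v * gaussianPDFReal m v c) :=
        integral_Ioi_of_hasDerivAt_of_tendsto' (fun x _ => hderiv x) hint.integrableOn hlim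
    _ = v * gaussianPDFReal m v c := by ring

/-- The mean `E|X + t|` of the folded normal distribution, where `X` is a centered Gaussian of
variance `v`. -/
def foldedGaussianMean (v : ℝ≥0) (t : ℝ) : ℝ := ∫ x, |x + t| ∂gaussianReal 0 v

lemma foldedGaussianMean_sq_mul (c : ℝ) (v : ℝ≥0) (t : ℝ) :
    foldedGaussianMean (.mk (c ^ 2) (sq_nonneg c) * v) t
      = ∫ x, |c * x + t| ∂gaussianReal 0 v := by
  rw [foldedGaussianMean, ← mul_zero c, ← gaussianReal_map_const_mul,
    integral_map (by fun_prop) (by fun_prop), mul_zero]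

lemma two_mul_sub_one_mul_gaussianPDFReal_le_integral_abs_sub (c t : ℝ) {v : ℝ≥0} (hv : v ≠ 0) :
    2 * (c - 1) * (v * gaussianPDFReal 0 v t)
      ≤ ∫ x, |c * x + t| ∂gaussianReal 0 v - ∫ x, |x + t| ∂gaussianReal 0 v := by
  have hid : Integrable (fun x => x) (gaussianReal 0 v) := integrable_id_gaussianReal 0 v
  have hscaled : Integrable (fun x => c * x + t) (gaussianReal 0 v) :=
    (hid.const_mul c).add (integrable_const t)
  have hshift : Integrable (fun x => x + t) (gaussianReal 0 v) := hid.add (integrable_const t)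
  have hlower := two_mul_setIntegral_sub_integral_le_integral_abs hscaled
    (measurableSet_Ioi (a := -t))
  have heq := integral_abs_eq_two_mul_setIntegral_sub_integral hshift
    (measurableSet_Ioi (a := -t)) (fun x hx => by linarith [mem_Ioi.1 hx])
    (fun x hx => by linarith [notMem_Ioi.1 hx])
  have htail : ∫ x in Ioi (-t), x ∂gaussianReal 0 v = v * gaussianPDFReal 0 v t := by
    simpa only [gaussianPDFReal, sub_zero, neg_sq] using setIntegral_Ioi_sub_gaussianReal 0 hv (-t)
  rw [integral_add (hid.const_mul c).integrableOn (integrable_const t).integrableOn,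
    integral_add (hid.const_mul c) (integrable_const t), integral_const_mul, integral_const_mul,
    htail, integral_id_gaussianReal] at hlower
  rw [integral_add hid.integrableOn (integrable_const t).integrableOn,
    integral_add hid (integrable_const t), htail, integral_id_gaussianReal] at heq
  linarith

lemma two_mul_sqrt_mul_gaussianPDFReal_zero {v : ℝ≥0} (hv : v ≠ 0) (t : ℝ) :
    2 * √v * gaussianPDFReal 0 v t = √(2 / π) * exp (-t ^ 2 / (2 * v)) := by
  have hsv : √(v : ℝ) ≠ 0 := (sqrt_pos.2 (by positivity)).ne'
  have h2 : √(2 : ℝ) ^ 2 = 2 := sq_sqrt zero_le_two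
  rw [gaussianPDFReal, sub_zero, sqrt_mul (by positivity), sqrt_mul zero_le_two,
    sqrt_div zero_le_two]
  field_simp [hsv]
  rw [h2]

lemma sqrt_sub_sqrt_mul_le_foldedGaussianMean_sub {v : ℝ≥0} (hv : v ≠ 0) (w : ℝ≥0) (t : ℝ) :
    (√w - √v) * (√(2 / π) * exp (-t ^ 2 / (2 * v)))
      ≤ foldedGaussianMean w t - foldedGaussianMean v t := by
  have hw : w = .mk ((√w / √v) ^ 2) (sq_nonneg _) * v := by
    ext
    simp [div_pow, hv]
  have hscale : foldedGaussianMean w t = ∫ x, |√w / √v * x + t| ∂gaussianReal 0 v := by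
    rw [← foldedGaussianMean_sq_mul, ← hw]
  have hslope : (√w - √v) * (2 * √v * gaussianPDFReal 0 v t)
      = 2 * (√w / √v - 1) * (v * gaussianPDFReal 0 v t) := by
    have hvv : √(v : ℝ) ^ 2 = v := sq_sqrt v.2
    have hsv : √(v : ℝ) ≠ 0 := (sqrt_pos.2 (by positivity)).ne'
    field_simp [hsv]
    rw [hvv]
    ring
  rw [← two_mul_sqrt_mul_gaussianPDFReal_zero hv, hslope, hscale, foldedGaussianMean]
  exact two_mul_sub_one_mul_gaussianPDFReal_le_integral_abs_sub _ _ hv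

end Gaussian

section Independence

open scoped NNReal

variable {Ω : Type*} [MeasurableSpace Ω] {P : Measure Ω}

section Fubini

variable {α β F : Type*} [MeasurableSpace α] [MeasurableSpace β] [NormedAddCommGroup F]
  [NormedSpace ℝ F] {μ : Measure α} {ν : Measure β} {X : Ω → α} {Y : Ω → β} {g : α × β → F}

lemma integrable_integral_comp_of_hasLaw [SFinite ν] (hX : HasLaw X μ P)
    (hg : Integrable g (μ.prod ν)) : Integrable (fun ω => ∫ y, g (X ω, y) ∂ν) P := by
  have hint : Integrable (fun x => ∫ y, g (x, y) ∂ν) (P.map X) := hX.map_eq ▸ hg.integral_prod_left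
  exact hint.comp_aemeasurable hX.aemeasurable

lemma integral_comp_prodMk_of_indepFun [IsFiniteMeasure P] [SFinite μ] [SFinite ν]
    (hX : HasLaw X μ P) (hY : HasLaw Y ν P) (hXY : IndepFun X Y P) (hg : Integrable g (μ.prod ν)) :
    ∫ ω, g (X ω, Y ω) ∂P = ∫ ω, ∫ y, g (X ω, y) ∂ν ∂P :=
  calc ∫ ω, g (X ω, Y ω) ∂P
      = ∫ p, g p ∂μ.prod ν := (hXY.hasLaw_prod hX hY).integral_comp hg.aestronglyMeasurable
    _ = ∫ x, ∫ y, g (x, y) ∂ν ∂μ := integral_prod g hg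
    _ = ∫ ω, ∫ y, g (X ω, y) ∂ν ∂P :=
        (hX.integral_comp hg.integral_prod_left.aestronglyMeasurable).symm

end Fubini

variable {U V b : Ω → ℝ} {v w : ℝ≥0}

lemma integrable_abs_add_prod_gaussianReal {μ : Measure ℝ} [IsFiniteMeasure μ]
    (hμ : Integrable (fun t => t) μ) (v : ℝ≥0) :
    Integrable (fun p : ℝ × ℝ => |p.2 + p.1|) (μ.prod (gaussianReal 0 v)) :=
  (((integrable_id_gaussianReal 0 v).comp_snd μ).add (hμ.comp_fst _)).abs

lemma integrable_id_map (hb : Integrable b P) : Integrable (fun t => t) (P.map b) :=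
  (integrable_map_measure (by fun_prop) hb.aemeasurable).2 hb

lemma integrable_foldedGaussianMean_comp [IsFiniteMeasure P] (hb : Integrable b P) (v : ℝ≥0) :
    Integrable (fun ω => foldedGaussianMean v (b ω)) P :=
  integrable_integral_comp_of_hasLaw ⟨hb.aemeasurable, rfl⟩
    (integrable_abs_add_prod_gaussianReal (integrable_id_map hb) v)

lemma integral_abs_add_eq_integral_foldedGaussianMean (hU : HasLaw U (gaussianReal 0 v) P)
    (hb : Integrable b P) (hUb : IndepFun U b P) :
    ∫ ω, |U ω + b ω| ∂P = ∫ ω, foldedGaussianMean v (b ω) ∂P := by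
  have := hU.isProbabilityMeasure
  exact integral_comp_prodMk_of_indepFun ⟨hb.aemeasurable, rfl⟩ hU hUb.symm
    (integrable_abs_add_prod_gaussianReal (integrable_id_map hb) v)

lemma integrable_exp_neg_sq_div [IsFiniteMeasure P] (hb : AEMeasurable b P) {a : ℝ} (ha : 0 ≤ a) :
    Integrable (fun ω => exp (-b ω ^ 2 / a)) P := by
  refine Integrable.of_bound (C := 1) (by fun_prop) (ae_of_all _ fun ω => ?_)
  rw [norm_of_nonneg (exp_pos _).le, exp_le_one_iff, neg_div]
  exact neg_nonpos.2 (by positivity)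

lemma sqrt_sub_sqrt_mul_integral_exp_le_integral_abs_sub (hv : v ≠ 0)
    (hU : HasLaw U (gaussianReal 0 w) P) (hV : HasLaw V (gaussianReal 0 v) P)
    (hb : Integrable b P) (hUb : IndepFun U b P) (hVb : IndepFun V b P) :
    (√w - √v) * (√(2 / π) * ∫ ω, exp (-b ω ^ 2 / (2 * v)) ∂P)
      ≤ ∫ ω, |U ω + b ω| ∂P - ∫ ω, |V ω + b ω| ∂P := by
  have := hU.isProbabilityMeasure
  rw [integral_abs_add_eq_integral_foldedGaussianMean hU hb hUb,
    integral_abs_add_eq_integral_foldedGaussianMean hV hb hVb,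
    ← integral_sub (integrable_foldedGaussianMean_comp hb w)
      (integrable_foldedGaussianMean_comp hb v), ← integral_const_mul, ← integral_const_mul]
  exact integral_mono
    (((integrable_exp_neg_sq_div hb.aemeasurable (by positivity)).const_mul _).const_mul _)
    ((integrable_foldedGaussianMean_comp hb w).sub (integrable_foldedGaussianMean_comp hb v))
    fun ω => sqrt_sub_sqrt_mul_le_foldedGaussianMean_sub hv w (b ω)

end Independence

lemma etaT_lt_one {Ω : Type} [MeasurableSpace Ω] {P : Measure Ω} [IsProbabilityMeasure P]
    {b : Ω → ℝ} (hb : AEMeasurable b P) (σ : ℝ) : etaT P b σ < 1 :=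
  sub_lt_self 1 (integral_exp_pos (integrable_exp_neg_sq_div hb (by positivity)))

lemma sqrt_two_sub_one_mul_le_sqrt_add_sq_sub {a c : ℝ} (ha : 0 ≤ a) (hac : a ≤ c) :
    (√2 - 1) * c ≤ √(c ^ 2 + a ^ 2) - a := by
  have h2 : √(2 : ℝ) ^ 2 = 2 := sq_sqrt zero_le_two
  have hr : 0 ≤ √2 - 1 := sub_nonneg.2 one_lt_sqrt_two.le
  have hdiff : c ^ 2 + a ^ 2 - ((√2 - 1) * c + a) ^ 2 = 2 * (√2 - 1) * c * (c - a) := by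
    linear_combination -c ^ 2 * h2
  have hnonneg : 0 ≤ 2 * (√2 - 1) * c * (c - a) :=
    mul_nonneg (mul_nonneg (by positivity) (ha.trans hac)) (sub_nonneg.2 hac)
  rw [le_sub_iff_add_le]
  exact le_sqrt_of_sq_le (by linarith)

lemma one_le_ten_mul_sqrt_two_sub_one_mul_sqrt_sq :
    1 ≤ 10 * ((√2 - 1) * √(2 / π)) ^ 2 := by
  have hsqrt : 0.414 ≤ √2 - 1 := by
    have : (1.414 : ℝ) ≤ √2 := le_sqrt_of_sq_le (by norm_num)
    linarith
  have hpi : 0.6 ≤ 2 / π := by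
    rw [le_div_iff₀ pi_pos]
    linarith [pi_lt_d2]
  calc (1 : ℝ) ≤ 10 * (0.414 ^ 2 * 0.6) := by norm_num
    _ ≤ 10 * ((√2 - 1) ^ 2 * (2 / π)) := by gcongr
    _ = 10 * ((√2 - 1) * √(2 / π)) ^ 2 := by rw [mul_pow, sq_sqrt (by positivity)]

lemma sq_le_ten_div_sq_mul_sq {a c m D : ℝ} (ha : 0 ≤ a) (hac : a ≤ c) (hm : 0 < m)
    (hD : (√(c ^ 2 + a ^ 2) - a) * (√(2 / π) * m) ≤ D) : c ^ 2 ≤ 10 / m ^ 2 * D ^ 2 := by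
  have hc : 0 ≤ c := ha.trans hac
  have hlower : (√2 - 1) * c * (√(2 / π) * m) ≤ D :=
    (mul_le_mul_of_nonneg_right (sqrt_two_sub_one_mul_le_sqrt_add_sq_sub ha hac)
      (by positivity)).trans hD
  have hr : 0 ≤ √2 - 1 := sub_nonneg.2 one_lt_sqrt_two.le
  calc c ^ 2 ≤ 10 * ((√2 - 1) * √(2 / π)) ^ 2 * c ^ 2 :=
        le_mul_of_one_le_left (sq_nonneg c) one_le_ten_mul_sqrt_two_sub_one_mul_sqrt_sq
    _ = 10 / m ^ 2 * ((√2 - 1) * c * (√(2 / π) * m)) ^ 2 := by field_simp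
    _ ≤ 10 / m ^ 2 * D ^ 2 := by gcongr

/-- The mean absolute error `E|y - ⟪x, θ⟫|` of the linear predictor `θ`, for covariates in an
arbitrary inner product space; `fLoss` is the case `E = ℝ^d`, `y = ⟪x, θ*⟫ + ε + b`. -/
def meanAbsError {E Ω : Type*} [NormedAddCommGroup E] [InnerProductSpace ℝ E] [MeasurableSpace Ω]
    (P : Measure Ω) (x : Ω → E) (y : Ω → ℝ) (θ : E) : ℝ :=
  ∫ ω, |y ω - ⟪x ω, θ⟫| ∂P

lemma meanAbsError_inner_add {E Ω : Type*} [NormedAddCommGroup E] [InnerProductSpace ℝ E]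
    [MeasurableSpace Ω] (P : Measure Ω) (x : Ω → E) (ε b : Ω → ℝ) (θs θ : E) :
    meanAbsError P x (fun ω => ⟪x ω, θs⟫ + ε ω + b ω) θ
      = ∫ ω, |⟪θs - θ, x ω⟫ + ε ω + b ω| ∂P := by
  unfold meanAbsError
  congr! 3 with ω
  rw [inner_sub_left, real_inner_comm (x ω), real_inner_comm (x ω)]
  ring

theorem stmt12_general {E : Type*} [NormedAddCommGroup E] [InnerProductSpace ℝ E]
    [MeasurableSpace E] [OpensMeasurableSpace E] {Ω : Type} [MeasurableSpace Ω] {P : Measure Ω}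
    {T : E →ₗ[ℝ] E} (hT : T.IsPositive) {σ : ℝ} (hσ : 0 < σ) {x : Ω → E} {ε b : Ω → ℝ}
    (hx : ∀ v, HasLaw (fun ω => ⟪v, x ω⟫) (gaussianReal 0 ⟪v, T v⟫.toNNReal) P)
    (hε : HasLaw ε (gaussianReal 0 (σ ^ 2).toNNReal) P) (hb : Integrable b P)
    (hxε : IndepFun x ε P) (hxεb : IndepFun (fun ω => (x ω, ε ω)) b P) {θs θ : E}
    (hθ : σ ≤ √⟪θ - θs, T (θ - θs)⟫) :
    √⟪θ - θs, T (θ - θs)⟫ ^ 2 ≤ 10 / (1 - etaT P b σ) ^ 2 *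
      (meanAbsError P x (fun ω => ⟪x ω, θs⟫ + ε ω + b ω) θ
        - meanAbsError P x (fun ω => ⟪x ω, θs⟫ + ε ω + b ω) θs) ^ 2 := by
  have := hε.isProbabilityMeasure
  set q := ⟪θ - θs, T (θ - θs)⟫
  have hq0 : 0 ≤ q := hT.re_inner_nonneg_right (θ - θs)
  have hinner : Measurable fun u : E => ⟪θs - θ, u⟫ := (innerSL ℝ (θs - θ)).measurable
  have hproj : HasLaw (fun ω => ⟪θs - θ, x ω⟫) (gaussianReal 0 q.toNNReal) P := by
    simpa only [← neg_sub θ θs, map_neg, inner_neg_neg] using hx (θs - θ)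
  have hprojε : IndepFun (fun ω => ⟪θs - θ, x ω⟫) ε P := hxε.comp hinner measurable_id
  have hres : HasLaw (fun ω => ⟪θs - θ, x ω⟫ + ε ω) (gaussianReal 0 (q + σ ^ 2).toNNReal) P := by
    have h := hprojε.hasLaw_fun_add hproj hε
    rwa [gaussianReal_conv_gaussianReal, add_zero, ← Real.toNNReal_add hq0 (sq_nonneg σ)] at h
  have hresb : IndepFun (fun ω => ⟪θs - θ, x ω⟫ + ε ω) b P :=
    hxεb.comp (φ := fun p : E × ℝ => ⟪θs - θ, p.1⟫ + p.2)
      ((hinner.comp measurable_fst).add measurable_snd) measurable_id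
  have hεb : IndepFun ε b P := hxεb.comp measurable_snd measurable_id
  refine sq_le_ten_div_sq_mul_sq hσ.le hθ (sub_pos.2 (etaT_lt_one hb.aemeasurable σ)) ?_
  have hgap := sqrt_sub_sqrt_mul_integral_exp_le_integral_abs_sub
    (by simpa using hσ.ne') hres hε hb hresb hεb
  rw [coe_toNNReal _ (by positivity), coe_toNNReal _ (by positivity), sqrt_sq hσ.le] at hgap
  simpa only [meanAbsError_inner_add, etaT, sub_sub_cancel, sub_self, inner_zero_left, zero_add,
    sq_sqrt hq0] using hgap

theorem stmt12 {d : ℕ} (hd : 1 ≤ d)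
    {Ω : Type} [MeasurableSpace Ω] (P : Measure Ω) [IsProbabilityMeasure P]
    (θs : Vec d) (H : Matrix (Fin d) (Fin d) ℝ) (hH : H.PosDef)
    (σ η : ℝ) (hσ : 0 < σ) (hη0 : 0 ≤ η) (hη1 : η < 1)
    (x : Ω → Vec d) (ε b : Ω → ℝ)
    (hxm : Measurable x) (hεm : Measurable ε) (hbm : Measurable b)
    (hxg : ∀ v : Vec d, Measure.map (fun ω => ⟪v, x ω⟫) P
        = gaussianReal 0 (Real.toNNReal ⟪v, Matrix.toEuclideanLin H v⟫))
    (hεg : Measure.map ε P = gaussianReal 0 (Real.toNNReal (σ ^ 2)))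
    (hbη : P {ω | b ω ≠ 0} = ENNReal.ofReal η)
    (hbi : Integrable b P)
    (hind1 : IndepFun x ε P)
    (hind2 : IndepFun (fun ω => (x ω, ε ω)) b P):
    ∀ θ : Vec d, σ ≤ sigTh H θs θ →
      sigTh H θs θ ^ 2 ≤ 10 / (1 - etaT P b σ) ^ 2 *
        (fLoss P x ε b θs θ - fLoss P x ε b θs θs) ^ 2 := by
  intro θ hθ
  exact stmt12_general (Matrix.isPositive_toEuclideanLin_iff.2 hH.posSemidef) hσ
    (fun v => ⟨by fun_prop, hxg v⟩) ⟨hεm.aemeasurable, hεg⟩ hbi hind1 hind2 hθ
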